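/- arXiv:2208.00917 — 2 statements merged into one kernel-verified Lean document; each statement's English description precedes it below -/
import Mathlib

section
/- Let n be a positive integer and t > 0. Then all zeros of the entire function x ↦ Z_{n,t}(x) are simple; that is, for every x ∈ ℂ with Z_{n,t}(x) = 0, the derivative Z_{n,t}′(x) ≠ 0. -/
open scoped Real

noncomputable def spin (b : Bool) : ℝ := if b then 1 else -1

/-- The Curie-Weiss partition function `Z_{n,t}(x)`. -/
noncomputable def CWZ (n : ℕ) (t x : ℂ) : ℂ :=
  ∑ σ : Fin n → Bool, Complex.exp
    (t * ((∑ j, spin (σ j) : ℝ) : ℂ) ^ 2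
      + Complex.I * x * ((∑ j, spin (σ j) : ℝ) : ℂ))

open Polynomial in
/-- The Lee-Yang polynomial `∑ k, (n choose k) q ^ (k (n - k)) X ^ k` of the complete graph. -/
noncomputable def leeYangPoly (q : ℝ) (n : ℕ) : ℂ[X] :=
  ∑ k ∈ Finset.range (n + 1), monomial k ((n.choose k : ℂ) * (q : ℂ) ^ (k * (n - k)))

namespace leeYangPoly

open Polynomial

theorem coeff (q : ℝ) (n k : ℕ) :
    (leeYangPoly q n).coeff k = (n.choose k : ℂ) * (q : ℂ) ^ (k * (n - k)) := by
  simp only [leeYangPoly, finsetSum_coeff, coeff_monomial, Finset.sum_ite_eq', Finset.mem_range]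
  split_ifs with h
  · rfl
  · simp [Nat.choose_eq_zero_of_lt (show n < k by omega)]

theorem eval_eq_sum (q : ℝ) (n : ℕ) (z : ℂ) :
    (leeYangPoly q n).eval z =
      ∑ k ∈ Finset.range (n + 1), (n.choose k : ℂ) * (q : ℂ) ^ (k * (n - k)) * z ^ k := by
  simp [leeYangPoly, eval_finsetSum]

theorem natDegree_eq (q : ℝ) (n : ℕ) : (leeYangPoly q n).natDegree = n := by
  refine natDegree_eq_of_le_of_coeff_ne_zero ?_ ?_
  · refine natDegree_le_iff_coeff_eq_zero.2 fun k hk => ?_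
    simp [coeff, Nat.choose_eq_zero_of_lt hk]
  · simp [coeff]

theorem derivative_succ {q : ℝ} (hq : q ≠ 0) (n : ℕ) :
    derivative (leeYangPoly q (n + 1)) =
      C ((n + 1 : ℂ) * (q : ℂ) ^ n) * (leeYangPoly q n).comp (C (q : ℂ)⁻¹ * X) := by
  ext k
  have hq' : (q : ℂ) ≠ 0 := by exact_mod_cast hq
  rw [coeff_derivative, coeff_C_mul, comp_C_mul_X_coeff, coeff, coeff]
  rcases lt_or_ge n k with h | h
  · simp [Nat.choose_eq_zero_of_lt h, Nat.choose_eq_zero_of_lt (show n + 1 < k + 1 by omega)]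
  · obtain ⟨m, rfl⟩ := Nat.exists_eq_add_of_le h
    have hc := congrArg (Nat.cast (R := ℂ)) (Nat.add_one_mul_choose_eq (k + m) k)
    push_cast at hc
    have e₁ : k + m + 1 - (k + 1) = m := by omega
    have e₂ : k + m - k = m := by omega
    rw [e₁, e₂, inv_pow]
    field_simp
    push_cast
    linear_combination (-(q : ℂ) ^ (k * m + k + m)) * hc

theorem succ {q : ℝ} (hq : q ≠ 0) (n : ℕ) :
    leeYangPoly q (n + 1) = (leeYangPoly q n).comp (C (q : ℂ) * X) +
      C ((q : ℂ) ^ n) * ((leeYangPoly q n).comp (C (q : ℂ)⁻¹ * X) * X) := by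
  ext k
  have hq' : (q : ℂ) ≠ 0 := by exact_mod_cast hq
  rw [coeff_add, coeff_C_mul, comp_C_mul_X_coeff, coeff, coeff]
  cases k with
  | zero => simp
  | succ k =>
    rw [coeff_mul_X, comp_C_mul_X_coeff, coeff]
    rcases lt_trichotomy n k with h | rfl | h
    · simp [Nat.choose_eq_zero_of_lt h, Nat.choose_eq_zero_of_lt (show n < k + 1 by omega),
        Nat.choose_eq_zero_of_lt (show n + 1 < k + 1 by omega)]
    · simp [hq']
    · obtain ⟨m, rfl⟩ := Nat.exists_eq_add_of_lt h
      have e₁ : k + m + 1 + 1 - (k + 1) = m + 1 := by omega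
      have e₂ : k + m + 1 - k = m + 1 := by omega
      have e₃ : k + m + 1 - (k + 1) = m := by omega
      rw [e₁, e₂, e₃, Nat.choose_succ_succ, inv_pow]
      field_simp
      push_cast
      ring

theorem eval_succ {q : ℝ} (hq : q ≠ 0) (n : ℕ) (z : ℂ) :
    (leeYangPoly q (n + 1)).eval z = (leeYangPoly q n).eval (q * z) +
      (q : ℂ) ^ n * ((leeYangPoly q n).eval ((q : ℂ)⁻¹ * z) * z) := by
  simp [succ hq]

end leeYangPoly

theorem norm_sq_sub_norm_sq_of_norm_eq_one (q : ℝ) (z : ℂ) {a : ℂ} (ha : ‖a‖ = 1) :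
    ‖q * z - a‖ ^ 2 - ‖z - q * a‖ ^ 2 = (1 - q ^ 2) * (1 - ‖z‖ ^ 2) := by
  have h : ‖a‖ ^ 2 = 1 := by rw [ha]; norm_num
  simp only [Complex.sq_norm, Complex.normSq_apply] at h ⊢
  simp only [Complex.sub_re, Complex.sub_im, Complex.mul_re, Complex.mul_im, Complex.ofReal_re,
    Complex.ofReal_im]
  linear_combination (1 - q ^ 2) * h

/-- Values at `q z` and `z / q` of a product over points of the unit circle. -/
theorem Multiset.norm_prod_sub_scaled {q : ℝ} (hq : 0 < q) (hq1 : q < 1) (z : ℂ)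
    (s : Multiset ℂ) (hs : ∀ a ∈ s, ‖a‖ = 1) :
    (‖z‖ ≤ 1 → q ^ s.card * ‖(s.map fun a => (q : ℂ)⁻¹ * z - a).prod‖ ≤
      ‖(s.map fun a => q * z - a).prod‖) ∧
    (1 ≤ ‖z‖ → ‖(s.map fun a => q * z - a).prod‖ ≤
      q ^ s.card * ‖(s.map fun a => (q : ℂ)⁻¹ * z - a).prod‖) := by
  have hq' : (q : ℂ) ≠ 0 := by exact_mod_cast hq.ne'
  induction s using Multiset.induction_on with
  | empty => simp
  | cons a s ih =>
    obtain ⟨ih₁, ih₂⟩ := ih fun b hb => hs b (Multiset.mem_cons_of_mem hb)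
    have key := norm_sq_sub_norm_sq_of_norm_eq_one q z (hs a (Multiset.mem_cons_self a s))
    have hscale : ‖z - q * a‖ = q * ‖(q : ℂ)⁻¹ * z - a‖ := by
      rw [← Complex.norm_of_nonneg hq.le, ← norm_mul, Complex.norm_of_nonneg hq.le]
      congr 1
      field_simp
    rw [hscale] at key
    have hpos : 0 < 1 - q ^ 2 := by nlinarith
    simp only [Multiset.map_cons, Multiset.prod_cons, Multiset.card_cons, norm_mul]
    have hsplit : ∀ u v : ℝ, q ^ (s.card + 1) * (u * v) = (q * u) * (q ^ s.card * v) := by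
      intro u v
      ring
    rw [hsplit]
    constructor <;> intro hz
    · refine mul_le_mul ?_ (ih₁ hz) (by positivity) (norm_nonneg _)
      refine (sq_le_sq₀ (by positivity) (by positivity)).1 ?_
      have : 0 ≤ 1 - ‖z‖ ^ 2 := by nlinarith [norm_nonneg z]
      nlinarith [mul_nonneg hpos.le this]
    · refine mul_le_mul ?_ (ih₂ hz) (norm_nonneg _) (by positivity)
      refine (sq_le_sq₀ (by positivity) (by positivity)).1 ?_
      have : 0 ≤ ‖z‖ ^ 2 - 1 := by nlinarith
      nlinarith [mul_nonneg hpos.le this]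

open Polynomial in
theorem Polynomial.norm_eval_scaled {q : ℝ} (hq : 0 < q) (hq1 : q < 1) (p : ℂ[X])
    (hp : ∀ a, p.eval a = 0 → ‖a‖ = 1) (z : ℂ) :
    (‖z‖ ≤ 1 → q ^ p.natDegree * ‖p.eval ((q : ℂ)⁻¹ * z)‖ ≤ ‖p.eval (q * z)‖) ∧
    (1 ≤ ‖z‖ → ‖p.eval (q * z)‖ ≤ q ^ p.natDegree * ‖p.eval ((q : ℂ)⁻¹ * z)‖) := by
  have hs := IsAlgClosed.splits p
  obtain ⟨h₁, h₂⟩ := Multiset.norm_prod_sub_scaled hq hq1 z p.roots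
    fun a ha => hp a (isRoot_of_mem_roots ha)
  have hsplit : ∀ u v w : ℝ, u * (v * w) = v * (u * w) := by
    intro u v w
    ring
  simp only [hs.eval_eq_prod_roots, norm_mul, hs.natDegree_eq_card_roots, hsplit _ ‖p.leadingCoeff‖]
  exact ⟨fun hz => mul_le_mul_of_nonneg_left (h₁ hz) (norm_nonneg _),
    fun hz => mul_le_mul_of_nonneg_left (h₂ hz) (norm_nonneg _)⟩

namespace leeYangPoly

/-- The Lee-Yang circle theorem for the complete graph. -/
theorem norm_eq_one_of_eval_eq_zero {q : ℝ} (hq : 0 < q) (hq1 : q < 1) (n : ℕ) :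
    ∀ z : ℂ, (leeYangPoly q n).eval z = 0 → ‖z‖ = 1 := by
  induction n with
  | zero => simp [eval_eq_sum]
  | succ n ih =>
    intro z hz
    obtain ⟨h₁, h₂⟩ := Polynomial.norm_eval_scaled hq hq1 _ ih z
    rw [natDegree_eq] at h₁ h₂
    rw [eval_succ hq.ne'] at hz
    have heq : ‖(leeYangPoly q n).eval (q * z)‖ =
        q ^ n * ‖(leeYangPoly q n).eval ((q : ℂ)⁻¹ * z)‖ * ‖z‖ := by
      rw [eq_neg_of_add_eq_zero_left hz, norm_neg, norm_mul, norm_mul, norm_pow,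
        Complex.norm_of_nonneg hq.le, mul_assoc]
    rcases lt_trichotomy ‖z‖ 1 with hlt | h | hgt
    · exfalso
      have hne : 0 < ‖(leeYangPoly q n).eval (q * z)‖ := by
        refine norm_pos_iff.2 fun h0 => ?_
        have := ih _ h0
        rw [norm_mul, Complex.norm_of_nonneg hq.le] at this
        nlinarith [norm_nonneg z]
      have := h₁ hlt.le
      nlinarith [norm_nonneg z]
    · exact h
    · exfalso
      have hne : 0 < ‖(leeYangPoly q n).eval ((q : ℂ)⁻¹ * z)‖ := by
        refine norm_pos_iff.2 fun h0 => ?_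
        have := ih _ h0
        rw [norm_mul, norm_inv, Complex.norm_of_nonneg hq.le, inv_mul_eq_one₀ hq.ne'] at this
        linarith
      have := h₂ hgt.le
      nlinarith [mul_pos (pow_pos hq n) hne]

/-- The Lee-Yang polynomial of the complete graph has simple zeros. -/
theorem eval_derivative_ne_zero {q : ℝ} (hq : 0 < q) (hq1 : q < 1) {n : ℕ} {z : ℂ}
    (hz : (leeYangPoly q n).eval z = 0) :
    (Polynomial.derivative (leeYangPoly q n)).eval z ≠ 0 := by
  cases n with
  | zero => simp [eval_eq_sum] at hz
  | succ n =>
    intro hd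
    have hq' : (q : ℂ) ≠ 0 := by exact_mod_cast hq.ne'
    have hn : (n + 1 : ℂ) ≠ 0 := by exact_mod_cast n.succ_ne_zero
    have h₁ : (leeYangPoly q n).eval ((q : ℂ)⁻¹ * z) = 0 := by
      simpa [derivative_succ hq.ne', hq', hn] using hd
    rw [eval_succ hq.ne', h₁] at hz
    have h₂ : (leeYangPoly q n).eval (q * z) = 0 := by simpa using hz
    have e₁ := norm_eq_one_of_eval_eq_zero hq hq1 n _ h₁
    have e₂ := norm_eq_one_of_eval_eq_zero hq hq1 n _ h₂
    rw [norm_mul, norm_inv, Complex.norm_of_nonneg hq.le, inv_mul_eq_one₀ hq.ne'] at e₁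
    rw [norm_mul, Complex.norm_of_nonneg hq.le, ← e₁] at e₂
    nlinarith

end leeYangPoly

theorem sum_spin_eq (n : ℕ) (σ : Fin n → Bool) :
    ∑ j, spin (σ j) = 2 * ((Finset.univ.filter fun j => σ j = true).card : ℝ) - n := by
  have h : ∀ j, spin (σ j) = 2 * (if σ j = true then (1 : ℝ) else 0) - 1 := by
    intro j
    unfold spin
    split_ifs <;> norm_num
  simp only [h, Finset.sum_sub_distrib, ← Finset.mul_sum, Finset.sum_boole]
  simp

theorem sum_apply_sum_spin {M : Type*} [AddCommMonoid M] (n : ℕ) (f : ℝ → M) :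
    ∑ σ : Fin n → Bool, f (∑ j, spin (σ j)) =
      ∑ k ∈ Finset.range (n + 1), n.choose k • f (2 * k - n) := by
  have h := Finset.sum_powerset_apply_card (fun k : ℕ => f (2 * k - n))
    (x := (Finset.univ : Finset (Fin n)))
  rw [Finset.card_univ, Fintype.card_fin, Finset.powerset_univ] at h
  rw [← h]
  refine Finset.sum_bij' (fun σ _ => Finset.univ.filter fun j => σ j = true)
    (fun s _ j => decide (j ∈ s)) ?_ ?_ ?_ ?_ ?_ <;> simp [sum_spin_eq]

theorem CWZ_eq_exp_mul_eval (n : ℕ) (t : ℝ) (x : ℂ) :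
    CWZ n t x = Complex.exp (t * n ^ 2 - Complex.I * x * n) *
      (leeYangPoly (Real.exp (-4 * t)) n).eval (Complex.exp (2 * Complex.I * x)) := by
  unfold CWZ
  rw [sum_apply_sum_spin n
    (fun s : ℝ => Complex.exp (t * (s : ℂ) ^ 2 + Complex.I * x * (s : ℂ))),
    leeYangPoly.eval_eq_sum, Finset.mul_sum]
  refine Finset.sum_congr rfl fun k hk => ?_
  obtain ⟨m, rfl⟩ := Nat.exists_eq_add_of_le (Nat.lt_succ_iff.1 (Finset.mem_range.1 hk))
  rw [nsmul_eq_mul, Nat.add_sub_cancel_left, Complex.ofReal_exp, ← Complex.exp_nat_mul,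
    ← Complex.exp_nat_mul, mul_assoc (Nat.cast _), mul_left_comm (Complex.exp _), ← Complex.exp_add,
    ← Complex.exp_add]
  congr 2
  push_cast
  ring

theorem stmt15 (n : ℕ) (hn : 0 < n) (t : ℝ) (ht : 0 < t)
    (x : ℂ) (hx : CWZ n t x = 0) :
    deriv (CWZ n t) x ≠ 0 := by
  have hfun : CWZ n t = fun y : ℂ => Complex.exp (t * n ^ 2 - Complex.I * y * n) *
      (leeYangPoly (Real.exp (-4 * t)) n).eval (Complex.exp (2 * Complex.I * y)) :=
    funext (CWZ_eq_exp_mul_eval n t)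
  rw [CWZ_eq_exp_mul_eval] at hx
  have hz := (mul_eq_zero.1 hx).resolve_left (Complex.exp_ne_zero _)
  have hd := leeYangPoly.eval_derivative_ne_zero (Real.exp_pos _)
    (Real.exp_lt_one_iff.mpr (by linarith)) hz
  have hf : DifferentiableAt ℂ
      (fun y : ℂ => Complex.exp (t * n ^ 2 - Complex.I * y * n)) x := by fun_prop
  have hg : HasDerivAt (fun y : ℂ => Complex.exp (2 * Complex.I * y))
      (Complex.exp (2 * Complex.I * x) * (2 * Complex.I * 1)) x :=
    ((hasDerivAt_id x).const_mul (2 * Complex.I)).cexp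
  have hp := ((leeYangPoly (Real.exp (-4 * t)) n).hasDerivAt
    (Complex.exp (2 * Complex.I * x))).comp x hg
  have hderiv := (hf.hasDerivAt.mul hp).deriv
  rw [hfun]
  refine ne_of_eq_of_ne hderiv ?_
  simp only [Function.comp_apply, hz, mul_zero, zero_add]
  exact mul_ne_zero (Complex.exp_ne_zero _) (mul_ne_zero hd
    (mul_ne_zero (Complex.exp_ne_zero _) (by simp)))
end

section
/- Let n be a positive even integer. Let x_1, …, x_{n/2} : [0,∞) → ℝ be continuous functions with x_k(0) = π/2 for each k, such that for every t > 0 one has 0 < x_1(t) < … < x_{n/2}(t) < π/2 and {x ∈ (0,π/2] : Z_{n,t}(x) = 0} = {x_1(t), …, x_{n/2}(t)}. Then for each k ∈ {1, …, n/2}, x_k(t_1) > x_k(t_2) whenever 0 ≤ t_1 < t_2. -/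
open scoped Real

open Polynomial

/-- Half of the total spin of the configuration `σ` when `n` is even. -/
def halfSpin {n : ℕ} (σ : Fin n → Bool) : ℤ :=
  ((Finset.univ.filter fun j => σ j = true).card : ℤ) - (n / 2 : ℕ)

/-- The polynomial whose value at `cos (2 * x)` is the Curie-Weiss partition function at `x`. -/
noncomputable def cwPoly (n : ℕ) (t : ℝ) : ℝ[X] :=
  ∑ σ : Fin n → Bool, C (Real.exp (4 * t * (halfSpin σ : ℝ) ^ 2)) * Chebyshev.T ℝ (halfSpin σ)

lemma sum_spin_eq_two_mul_halfSpin {n : ℕ} (hn : Even n) (σ : Fin n → Bool) :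
    ∑ j, spin (σ j) = 2 * (halfSpin σ : ℝ) := by
  have hspin : ∀ j, spin (σ j) = 2 * (if σ j = true then 1 else 0) - 1 := by
    intro j
    unfold spin
    split_ifs <;> norm_num
  have hhalf : (n : ℝ) = 2 * ((n / 2 : ℕ) : ℝ) := by
    exact_mod_cast (Nat.two_mul_div_two_of_even hn).symm
  simp_rw [hspin, Finset.sum_sub_distrib, ← Finset.mul_sum, Finset.sum_boole]
  simp only [halfSpin, Finset.sum_const, Finset.card_univ, Fintype.card_fin, nsmul_eq_mul, mul_one,
    Int.cast_sub, Int.cast_natCast]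
  linarith

lemma natAbs_halfSpin_le {n : ℕ} (hn : Even n) (σ : Fin n → Bool) :
    (halfSpin σ).natAbs ≤ n / 2 := by
  have hcard : (Finset.univ.filter fun j => σ j = true).card ≤ n := by
    simpa using Finset.card_le_univ (Finset.univ.filter fun j => σ j = true)
  have := Nat.two_mul_div_two_of_even hn
  unfold halfSpin
  omega

lemma sq_halfSpin_le {n : ℕ} (hn : Even n) (σ : Fin n → Bool) :
    (halfSpin σ : ℝ) ^ 2 ≤ ((n / 2 : ℕ) : ℝ) ^ 2 := by
  have h := natAbs_halfSpin_le hn σ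
  rw [sq_le_sq, abs_of_nonneg (Nat.cast_nonneg (α := ℝ) (n / 2)), ← Int.cast_abs,
    Int.abs_eq_natAbs, Int.cast_natCast]
  exact Nat.cast_le.2 h

lemma exists_sq_halfSpin_lt {n : ℕ} (hpos : 0 < n) (hn : Even n) :
    ∃ σ : Fin n → Bool, (halfSpin σ : ℝ) ^ 2 < ((n / 2 : ℕ) : ℝ) ^ 2 := by
  have h2 := Nat.two_mul_div_two_of_even hn
  refine ⟨fun j => decide (j = ⟨0, hpos⟩), ?_⟩
  have hval : halfSpin (fun j : Fin n => decide (j = ⟨0, hpos⟩)) = 1 - (n / 2 : ℕ) := by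
    simp [halfSpin, Finset.filter_eq']
  have h1 : (1 : ℝ) ≤ ((n / 2 : ℕ) : ℝ) := by exact_mod_cast (by omega : 1 ≤ n / 2)
  rw [hval, Int.cast_sub, Int.cast_one, Int.cast_natCast]
  nlinarith

lemma eval_cwPoly (n : ℕ) (t y : ℝ) :
    (cwPoly n t).eval y = ∑ σ : Fin n → Bool,
      Real.exp (4 * t * (halfSpin σ : ℝ) ^ 2) * (Chebyshev.T ℝ (halfSpin σ)).eval y := by
  simp [cwPoly, eval_finsetSum]

lemma re_CWZ {n : ℕ} (hn : Even n) (t x : ℝ) :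
    (CWZ n t x).re = (cwPoly n t).eval (Real.cos (2 * x)) := by
  rw [eval_cwPoly, CWZ, Complex.re_sum]
  refine Finset.sum_congr rfl fun σ _ => ?_
  rw [sum_spin_eq_two_mul_halfSpin hn, Chebyshev.T_real_cos, Complex.exp_re]
  congr 2
  · simp [pow_two]
    ring
  · simp [pow_two]
    ring

lemma natDegree_cwPoly_le {n : ℕ} (hn : Even n) (t : ℝ) : (cwPoly n t).natDegree ≤ n / 2 := by
  refine natDegree_sum_le_of_forall_le _ _ fun σ _ => (natDegree_C_mul_le _ _).trans ?_
  rw [Chebyshev.natDegree_T]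
  exact natAbs_halfSpin_le hn σ

lemma coeff_cwPoly_add {n : ℕ} (hn : Even n) (t s : ℝ) :
    (cwPoly n (t + s)).coeff (n / 2) =
      Real.exp (4 * s * ((n / 2 : ℕ) : ℝ) ^ 2) * (cwPoly n t).coeff (n / 2) := by
  simp only [cwPoly, finsetSum_coeff, coeff_C_mul, Finset.mul_sum]
  refine Finset.sum_congr rfl fun σ _ => ?_
  rcases (natAbs_halfSpin_le hn σ).lt_or_eq with h | h
  · rw [coeff_eq_zero_of_natDegree_lt (by rwa [Chebyshev.natDegree_T])]
    simp
  · have hsq : (halfSpin σ : ℝ) ^ 2 = ((n / 2 : ℕ) : ℝ) ^ 2 := by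
      rw [← h, ← sq_abs, ← Int.cast_abs, Int.abs_eq_natAbs]
      simp
    rw [hsq, ← mul_assoc, ← Real.exp_add]
    ring_nf

lemma eval_one_cwPoly_pos (n : ℕ) (t : ℝ) : 0 < (cwPoly n t).eval 1 := by
  rw [eval_cwPoly]
  simp only [Chebyshev.T_eval_one, mul_one]
  exact Finset.sum_pos (fun _ _ => Real.exp_pos _) Finset.univ_nonempty

lemma eval_one_cwPoly_add_lt {n : ℕ} (hpos : 0 < n) (hn : Even n) (t : ℝ) {s : ℝ} (hs : 0 < s) :
    (cwPoly n (t + s)).eval 1 <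
      Real.exp (4 * s * ((n / 2 : ℕ) : ℝ) ^ 2) * (cwPoly n t).eval 1 := by
  simp only [eval_cwPoly, Chebyshev.T_eval_one, mul_one, Finset.mul_sum, ← Real.exp_add]
  obtain ⟨τ, hτ⟩ := exists_sq_halfSpin_lt hpos hn
  refine Finset.sum_lt_sum (fun σ _ => Real.exp_le_exp.2 ?_)
    ⟨τ, Finset.mem_univ _, Real.exp_lt_exp.2 ?_⟩
  · nlinarith [sq_halfSpin_le hn σ]
  · nlinarith

/-- The backward heat equation in the variable `y = cos (2 * x)`. -/
lemma sum_sq_halfSpin_mul_eval_T (n : ℕ) (t y : ℝ) :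
    ∑ σ : Fin n → Bool, 4 * (halfSpin σ : ℝ) ^ 2 * Real.exp (4 * t * (halfSpin σ : ℝ) ^ 2) *
        (Chebyshev.T ℝ (halfSpin σ)).eval y =
      4 * (y * (derivative (cwPoly n t)).eval y -
        (1 - y ^ 2) * (derivative (derivative (cwPoly n t))).eval y) := by
  simp only [cwPoly, derivative_sum, derivative_C_mul, eval_finsetSum, eval_mul, eval_C,
    Finset.mul_sum, ← Finset.sum_sub_distrib]
  refine Finset.sum_congr rfl fun σ _ => ?_
  have h := congrArg (eval y)
    (Chebyshev.one_sub_X_sq_mul_derivative_derivative_T_eq_poly_in_T (R := ℝ) (halfSpin σ))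
  simp only [Function.iterate_succ, Function.iterate_zero, Function.comp_apply, id_eq, eval_mul,
    eval_sub, eval_one, eval_pow, eval_X, eval_intCast] at h
  linear_combination (4 * Real.exp (4 * t * (halfSpin σ : ℝ) ^ 2)) * h

lemma Polynomial.eq_C_coeff_mul_nodal {ι : Type*} {s : Finset ι} {v : ι → ℝ} {p : ℝ[X]}
    (hv : Set.InjOn v s) (hdeg : p.natDegree ≤ s.card) (hroot : ∀ i ∈ s, p.eval (v i) = 0) :
    p = C (p.coeff s.card) * Lagrange.nodal s v := by
  have hmonic : (Lagrange.nodal s v).coeff s.card = 1 := by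
    have := (Lagrange.nodal_monic (s := s) (v := v)).coeff_natDegree
    rwa [Lagrange.natDegree_nodal] at this
  refine sub_eq_zero.1 (eq_zero_of_degree_lt_of_eval_index_eq_zero s hv ?_ ?_)
  · rw [degree_lt_iff_coeff_zero]
    intro m hm
    rcases hm.eq_or_lt with rfl | hm
    · simp [hmonic]
    · rw [coeff_sub, coeff_C_mul, coeff_eq_zero_of_natDegree_lt (hdeg.trans_lt hm),
        coeff_eq_zero_of_natDegree_lt (p := Lagrange.nodal s v)
          (by rwa [Lagrange.natDegree_nodal])]
      simp
  · intro i hi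
    simp [hroot i hi, Lagrange.eval_nodal_at_node hi]

/-- At a node `v i`, the second derivative of the nodal polynomial is a multiple of the first. -/
lemma Lagrange.eval_derivative_derivative_nodal {ι : Type*} [DecidableEq ι] {s : Finset ι}
    {v : ι → ℝ} (hv : Set.InjOn v s) {i : ι} (hi : i ∈ s) :
    (derivative (derivative (nodal s v))).eval (v i) =
      2 * (∑ j ∈ s.erase i, (v i - v j)⁻¹) * (derivative (nodal s v)).eval (v i) := by
  have hne : ∀ j ∈ s.erase i, v i - v j ≠ 0 := fun j hj => by
    rw [Finset.mem_erase] at hj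
    exact sub_ne_zero.2 fun h => hj.1 (hv hj.2 hi h.symm)
  rw [eval_nodal_derivative_eval_node_eq hi, nodal_eq_mul_nodal_erase hi]
  have hd : (derivative (nodal (s.erase i) v)).eval (v i) =
      (∑ j ∈ s.erase i, (v i - v j)⁻¹) * (nodal (s.erase i) v).eval (v i) := by
    rw [derivative_nodal, eval_finsetSum, Finset.sum_mul]
    refine Finset.sum_congr rfl fun j hj => ?_
    rw [nodal_eq_mul_nodal_erase hj]
    simp [inv_mul_cancel_left₀ (hne j hj)]
  simp [hd]
  ring

lemma hasDerivAt_of_eventually_eq_zero {F : ℝ × ℝ → ℝ} {w : ℝ → ℝ} {t a b : ℝ}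
    (hF : HasFDerivAt F (a • ContinuousLinearMap.fst ℝ ℝ ℝ + b • ContinuousLinearMap.snd ℝ ℝ ℝ)
      (t, w t))
    (hb : b ≠ 0) (hw : ContinuousAt w t) (hzero : ∀ᶠ τ in nhds t, F (τ, w τ) = 0) :
    HasDerivAt w (-a / b) t := by
  have hlim : Filter.Tendsto (fun τ => (τ, w τ)) (nhds t) (nhds (t, w t)) :=
    continuousAt_id.prodMk hw
  have hrem : (fun τ => w τ - w t - (τ - t) * (-a / b)) =o[nhds t]
      fun τ => ((τ - t, w τ - w t) : ℝ × ℝ) := by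
    have h := (hF.isLittleO.comp_tendsto hlim).const_mul_left (-b⁻¹)
    refine h.congr' ?_ (Filter.Eventually.of_forall fun τ => rfl)
    filter_upwards [hzero] with τ hτ
    simp [hτ, hzero.self_of_nhds]
    field_simp
    ring
  have hrem' : (fun τ => ((0, w τ - w t - (τ - t) * (-a / b)) : ℝ × ℝ)) =o[nhds t]
      fun τ => ((τ - t, w τ - w t) : ℝ × ℝ) := by
    refine Asymptotics.IsBigO.trans_isLittleO ?_ hrem
    exact (Asymptotics.isBigO_zero _ _).prod_left (Asymptotics.isBigO_refl _ _)
  have hbig : (fun τ => ((τ - t, w τ - w t) : ℝ × ℝ)) =O[nhds t] fun τ => τ - t := by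
    refine hrem'.right_isBigO_sub.trans ?_
    have hlin : (fun τ => ((τ - t, (τ - t) * (-a / b)) : ℝ × ℝ)) =O[nhds t] fun τ => τ - t := by
      refine (Asymptotics.isBigO_refl _ _).prod_left ?_
      simpa [mul_comm] using (Asymptotics.isBigO_refl (fun τ => τ - t) (nhds t)).const_mul_left
        (-a / b)
    refine hlin.congr_left fun τ => ?_
    simp
  rw [hasDerivAt_iff_isLittleO]
  exact hrem.trans_isBigO hbig

lemma hasFDerivAt_eval_cwPoly (n : ℕ) (t y : ℝ) :
    HasFDerivAt (fun p : ℝ × ℝ => (cwPoly n p.1).eval p.2)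
      ((4 * (y * (derivative (cwPoly n t)).eval y -
          (1 - y ^ 2) * (derivative (derivative (cwPoly n t))).eval y)) •
            ContinuousLinearMap.fst ℝ ℝ ℝ +
        (derivative (cwPoly n t)).eval y • ContinuousLinearMap.snd ℝ ℝ ℝ) (t, y) := by
  rw [← sum_sq_halfSpin_mul_eval_T]
  simp only [eval_cwPoly]
  have hterm : ∀ σ ∈ (Finset.univ : Finset (Fin n → Bool)), HasFDerivAt
      (fun p : ℝ × ℝ => Real.exp (4 * p.1 * (halfSpin σ : ℝ) ^ 2) *
        (Chebyshev.T ℝ (halfSpin σ)).eval p.2) _ (t, y) := fun σ _ =>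
    HasFDerivAt.mul
      ((((hasFDerivAt_fst (𝕜 := ℝ) (p := (t, y))).const_mul 4).mul_const
        ((halfSpin σ : ℝ) ^ 2)).exp)
      (HasDerivAt.comp_hasFDerivAt (f := Prod.snd) (t, y)
        ((Chebyshev.T ℝ (halfSpin σ)).hasDerivAt y) hasFDerivAt_snd)
  refine (HasFDerivAt.fun_sum hterm).congr_fderiv ?_
  ext
  · simp
    refine Finset.sum_congr rfl fun σ _ => ?_
    ring
  · simp [cwPoly, eval_finsetSum]

/-- The equation of motion of the roots of `cwPoly n t`. -/
lemma hasDerivAt_root_cwPoly {n : ℕ} (hn : Even n) {I : Finset ℕ} (hI : I.card = n / 2)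
    {w : ℕ → ℝ → ℝ} {t : ℝ} (hw : ∀ k ∈ I, ContinuousAt (w k) t)
    (hroot : ∀ᶠ τ in nhds t, ∀ k ∈ I, (cwPoly n τ).eval (w k τ) = 0)
    (hinj : Set.InjOn (fun k => w k t) I) {k : ℕ} (hk : k ∈ I) :
    HasDerivAt (w k) (-4 * w k t +
      8 * (1 - w k t ^ 2) * ∑ j ∈ I.erase k, (w k t - w j t)⁻¹) t := by
  have hfac := eq_C_coeff_mul_nodal hinj (hI ▸ natDegree_cwPoly_le hn t) hroot.self_of_nhds
  set c := (cwPoly n t).coeff I.card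
  have hc : c ≠ 0 := by
    intro hc
    have := eval_one_cwPoly_pos n t
    rw [hfac, hc] at this
    simp at this
  have hd1 : (derivative (Lagrange.nodal I fun k => w k t)).eval (w k t) ≠ 0 := by
    rw [Lagrange.eval_nodal_derivative_eval_node_eq (v := fun k => w k t) hk, Lagrange.eval_nodal,
      Finset.prod_ne_zero_iff]
    intro j hj
    rw [Finset.mem_erase] at hj
    exact sub_ne_zero.2 fun h => hj.1 (hinj hj.2 hk h.symm)
  have hd2 := Lagrange.eval_derivative_derivative_nodal hinj hk
  have hb : (derivative (cwPoly n t)).eval (w k t) ≠ 0 := by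
    rw [hfac, derivative_C_mul, eval_mul, eval_C]
    exact mul_ne_zero hc hd1
  have h := hasDerivAt_of_eventually_eq_zero (hasFDerivAt_eval_cwPoly n t (w k t)) hb (hw k hk)
    (hroot.mono fun τ hτ => hτ k hk)
  convert h using 1
  rw [eq_div_iff hb, hfac]
  simp only [derivative_C_mul, eval_mul, eval_C, hd2]
  ring

/-- The polynomials `cwPoly n t` at two different times do not share all their roots. -/
lemma exists_root_cwPoly_ne {n : ℕ} (hpos : 0 < n) (hn : Even n) {I : Finset ℕ}
    (hI : I.card = n / 2) {v v' : ℕ → ℝ} {t s : ℝ} (hs : 0 < s) (hinj : Set.InjOn v I)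
    (hv : ∀ k ∈ I, (cwPoly n t).eval (v k) = 0)
    (hv' : ∀ k ∈ I, (cwPoly n (t + s)).eval (v' k) = 0) : ∃ k ∈ I, v k ≠ v' k := by
  by_contra! heq
  have hfac := eq_C_coeff_mul_nodal hinj (hI ▸ natDegree_cwPoly_le hn t) hv
  have hfac' := eq_C_coeff_mul_nodal hinj (hI ▸ natDegree_cwPoly_le hn (t + s))
    fun k hk => by rw [heq k hk]; exact hv' k hk
  have hlt := eval_one_cwPoly_add_lt hpos hn t hs
  rw [hfac, hfac', hI, coeff_cwPoly_add hn] at hlt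
  simp [mul_assoc] at hlt

/-- A finite family of continuous functions, positive at `0`, stays positive if a member that
vanishes while all others are nonnegative has to be increasing. -/
lemma pos_of_hasDerivAt_pos_of_eq_zero {ι : Type*} {I : Finset ι} {D : ι → ℝ → ℝ}
    (hcont : ∀ k ∈ I, ContinuousOn (D k) (Set.Ici 0)) (hinit : ∀ k ∈ I, 0 < D k 0)
    (htouch : ∀ t, 0 < t → (∀ j ∈ I, 0 ≤ D j t) → ∀ k ∈ I, D k t = 0 →
      ∃ d, 0 < d ∧ HasDerivAt (D k) d t) :
    ∀ k ∈ I, ∀ t, 0 ≤ t → 0 < D k t := by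
  by_contra! hbad
  obtain ⟨k₀, hk₀, t₀, ht₀, hD₀⟩ := hbad
  set S : Set ℝ := ⋃ k ∈ I, Set.Ici 0 ∩ D k ⁻¹' Set.Iic 0 with hS
  have hclosed : IsClosed S := I.finite_toSet.isClosed_biUnion fun k hk =>
    (hcont k hk).preimage_isClosed_of_isClosed isClosed_Ici isClosed_Iic
  have hbdd : BddBelow S := ⟨0, fun t ht => by
    simp only [hS, Set.mem_iUnion] at ht
    obtain ⟨k, hk, ht, -⟩ := ht
    exact ht⟩
  have hmem : sInf S ∈ S := hclosed.csInf_mem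
    ⟨t₀, Set.mem_biUnion hk₀ ⟨ht₀, hD₀⟩⟩ hbdd
  set T := sInf S with hT
  obtain ⟨k, hk, hT0, hDk⟩ : ∃ k ∈ I, 0 ≤ T ∧ D k T ≤ 0 := by
    obtain ⟨k, hk, h⟩ := Set.mem_iUnion₂.1 hmem
    exact ⟨k, hk, h.1, h.2⟩
  have hTpos : 0 < T := hT0.lt_of_ne fun h => by
    rw [← h] at hDk
    exact (hinit k hk).not_ge hDk
  have hbefore : ∀ j ∈ I, ∀ t, 0 ≤ t → t < T → 0 < D j t := by
    intro j hj t ht htT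
    by_contra! hle
    exact htT.not_ge (csInf_le hbdd (Set.mem_biUnion hj ⟨ht, hle⟩))
  have hleft : ∀ᶠ t in nhdsWithin T (Set.Iio T), 0 ≤ t ∧ t < T := by
    filter_upwards [Ioo_mem_nhdsLT hTpos] with t ht using ⟨ht.1.le, ht.2⟩
  have hnonneg : ∀ j ∈ I, 0 ≤ D j T := by
    intro j hj
    have hc : ContinuousAt (D j) T := (hcont j hj).continuousAt (Ici_mem_nhds hTpos)
    refine ge_of_tendsto (hc.tendsto.mono_left (nhdsWithin_le_nhds (s := Set.Iio T))) ?_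
    filter_upwards [hleft] with t ht using (hbefore j hj t ht.1 ht.2).le
  have hzero : D k T = 0 := le_antisymm hDk (hnonneg k hk)
  obtain ⟨d, hd, hder⟩ := htouch T hTpos hnonneg k hk hzero
  have hslope := (hasDerivAt_iff_tendsto_slope.1 hder).mono_left
    (nhdsWithin_mono T (s := Set.Iio T) fun t ht => (Set.mem_Iio.1 ht).ne)
  refine hd.not_ge (le_of_tendsto hslope ?_)
  filter_upwards [hleft] with t ht
  rw [slope_def_field, hzero, sub_zero]
  exact div_nonpos_of_nonneg_of_nonpos (hbefore k hk t ht.1 ht.2).le (by linarith [ht.2])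

lemma inv_sub_le_inv_sub {a y z : ℝ} (hyz : y ≤ z) (h : 0 < (a - y) * (a - z)) :
    (a - y)⁻¹ ≤ (a - z)⁻¹ := by
  have hy : a - y ≠ 0 := left_ne_zero_of_mul h.ne'
  have hz : a - z ≠ 0 := right_ne_zero_of_mul h.ne'
  have : (a - z)⁻¹ - (a - y)⁻¹ = (z - y) / ((a - y) * (a - z)) := by
    field_simp
    ring
  have := div_nonneg (sub_nonneg.2 hyz) h.le
  linarith

lemma inv_sub_lt_inv_sub {a y z : ℝ} (hyz : y < z) (h : 0 < (a - y) * (a - z)) :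
    (a - y)⁻¹ < (a - z)⁻¹ :=
  (inv_sub_le_inv_sub hyz.le h).lt_of_ne fun he => hyz.ne (by
    have := inv_injective he
    linarith)

theorem stmt19 (n : ℕ) (hn : 0 < n) (heven : Even n)
    (x : ℕ → ℝ → ℝ)
    (hcont : ∀ k ∈ Finset.Icc 1 (n / 2), ContinuousOn (x k) (Set.Ici 0))
    (hinit : ∀ k ∈ Finset.Icc 1 (n / 2), x k 0 = π / 2)
    (hzeros : ∀ t : ℝ, 0 < t →
      (∀ k ∈ Finset.Icc 1 (n / 2), 0 < x k t ∧ x k t < π / 2) ∧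
      (∀ k, 1 ≤ k → k < n / 2 → x k t < x (k + 1) t) ∧
      {z : ℝ | z ∈ Set.Ioc 0 (π / 2) ∧ CWZ n t z = 0}
        = (fun k => x k t) '' Set.Icc 1 (n / 2)) :
    ∀ k ∈ Finset.Icc 1 (n / 2), ∀ t₁ t₂ : ℝ, 0 ≤ t₁ → t₁ < t₂ →
      x k t₁ > x k t₂ := by
  set I := Finset.Icc 1 (n / 2) with hIdef
  have hI : I.card = n / 2 := by simp [hIdef]
  set w : ℕ → ℝ → ℝ := fun k t => Real.cos (2 * x k t) with hw
  have hrange : ∀ k ∈ I, ∀ t, 0 ≤ t → 2 * x k t ∈ Set.Icc 0 π := by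
    intro k hk t ht
    rcases ht.eq_or_lt with rfl | ht
    · rw [hinit k hk]
      constructor <;> linarith [Real.pi_pos]
    · obtain ⟨h1, h2⟩ := (hzeros t ht).1 k hk
      constructor <;> linarith
  have hwcont : ∀ k ∈ I, ContinuousOn (w k) (Set.Ici 0) := fun k hk =>
    Real.continuous_cos.comp_continuousOn ((hcont k hk).const_mul 2)
  have hxmono : ∀ t, 0 < t → ∀ i ∈ I, ∀ j ∈ I, i < j → x i t < x j t := by
    intro t ht i hi j hj hij
    rw [Finset.mem_Icc] at hi hj
    induction j, hij using Nat.le_induction with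
    | base => exact (hzeros t ht).2.1 i hi.1 (by omega)
    | succ j hij ih =>
      exact (ih ⟨by omega, by omega⟩).trans ((hzeros t ht).2.1 j (by omega) (by omega))
  have hwanti : ∀ t, 0 < t → ∀ i ∈ I, ∀ j ∈ I, i < j → w j t < w i t := by
    intro t ht i hi j hj hij
    exact Real.strictAntiOn_cos (hrange i hi t ht.le) (hrange j hj t ht.le)
      (by linarith [hxmono t ht i hi j hj hij])
  have hinj : ∀ t, 0 < t → Set.InjOn (fun k => w k t) I := by
    intro t ht i hi j hj hij
    by_contra hne
    rcases lt_or_gt_of_ne hne with h | h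
    · exact (hwanti t ht i hi j hj h).ne hij.symm
    · exact (hwanti t ht j hj i hi h).ne hij
  have hroot : ∀ t, 0 < t → ∀ k ∈ I, (cwPoly n t).eval (w k t) = 0 := by
    intro t ht k hk
    have hmem : x k t ∈ {z : ℝ | z ∈ Set.Ioc 0 (π / 2) ∧ CWZ n t z = 0} := by
      rw [(hzeros t ht).2.2]
      exact ⟨k, by simpa [hIdef] using hk, rfl⟩
    rw [hw, ← re_CWZ heven, hmem.2, Complex.zero_re]
  have hbound : ∀ t, 0 < t → ∀ k ∈ I, -1 < w k t ∧ w k t < 1 := by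
    intro t ht k hk
    obtain ⟨h1, h2⟩ := (hzeros t ht).1 k hk
    constructor
    · rw [← Real.cos_pi]
      exact Real.strictAntiOn_cos (hrange k hk t ht.le) ⟨Real.pi_pos.le, le_rfl⟩ (by linarith)
    · rw [← Real.cos_zero]
      exact Real.strictAntiOn_cos ⟨le_rfl, Real.pi_pos.le⟩ (hrange k hk t ht.le) (by linarith)
  have hderiv : ∀ t, 0 < t → ∀ k ∈ I, HasDerivAt (w k) (-4 * w k t +
      8 * (1 - w k t ^ 2) * ∑ j ∈ I.erase k, (w k t - w j t)⁻¹) t := by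
    intro t ht k hk
    refine hasDerivAt_root_cwPoly heven hI
      (fun k hk => (hwcont k hk).continuousAt (Ici_mem_nhds ht)) ?_ (hinj t ht) hk
    filter_upwards [Ioi_mem_nhds ht] with τ hτ using hroot τ hτ
  have hgrow : ∀ s, 0 < s → ∀ k ∈ I, ∀ t, 0 ≤ t → 0 < w k (t + s) - w k t := by
    intro s hs
    refine pos_of_hasDerivAt_pos_of_eq_zero (D := fun k t => w k (t + s) - w k t) ?_ ?_ ?_
    · intro k hk
      refine ((hwcont k hk).comp (by fun_prop) fun t ht => ?_).sub (hwcont k hk)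
      exact add_nonneg (Set.mem_Ici.1 ht) hs.le
    · intro k hk
      have h0 : w k 0 = -1 := by
        rw [hw]
        simp only [hinit k hk]
        rw [mul_div_cancel₀ π two_ne_zero, Real.cos_pi]
      simpa [h0] using! (by linarith [(hbound s hs k hk).1] : 0 < w k s + 1)
    · intro t ht hnonneg k hk hzero
      have hts : 0 < t + s := by linarith
      refine ⟨_, ?_, ((hderiv (t + s) hts k hk).comp_add_const t s).sub (hderiv t ht k hk)⟩
      have hkk : w k (t + s) = w k t := sub_eq_zero.1 hzero
      rw [hkk]
      have hsame : ∀ j ∈ I.erase k, 0 < (w k t - w j t) * (w k t - w j (t + s)) := by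
        intro j hj
        obtain ⟨hjk, hj⟩ := Finset.mem_erase.1 hj
        rcases lt_or_gt_of_ne hjk with h | h
        · have h1 := hwanti t ht j hj k hk h
          have h2 := hwanti (t + s) hts j hj k hk h
          exact mul_pos_of_neg_of_neg (by linarith) (by linarith)
        · have h1 := hwanti t ht k hk j hj h
          have h2 := hwanti (t + s) hts k hk j hj h
          exact mul_pos (by linarith) (by linarith)
      obtain ⟨j, hj, hne⟩ := exists_root_cwPoly_ne hn heven hI hs (hinj t ht) (hroot t ht)
        (v' := fun k => w k (t + s)) (hroot (t + s) hts)
      have hjk : j ∈ I.erase k := Finset.mem_erase.2 ⟨fun h => hne (h ▸ hkk.symm), hj⟩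
      have hsum : ∑ j ∈ I.erase k, (w k t - w j t)⁻¹ <
          ∑ j ∈ I.erase k, (w k t - w j (t + s))⁻¹ := by
        refine Finset.sum_lt_sum (fun i hi => inv_sub_le_inv_sub
          (sub_nonneg.1 (hnonneg i (Finset.mem_of_mem_erase hi))) (hsame i hi)) ⟨j, hjk, ?_⟩
        exact inv_sub_lt_inv_sub ((sub_nonneg.1 (hnonneg j hj)).lt_of_ne hne) (hsame j hjk)
      have hcoef : 0 < 8 * (1 - w k t ^ 2) := by
        obtain ⟨h1, h2⟩ := hbound t ht k hk
        nlinarith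
      linarith [mul_lt_mul_of_pos_left hsum hcoef]
  intro k hk t₁ t₂ h0 hlt
  have h := hgrow (t₂ - t₁) (sub_pos.2 hlt) k hk t₁ h0
  rw [add_sub_cancel, sub_pos] at h
  have := (Real.strictAntiOn_cos.lt_iff_gt (hrange k hk t₁ h0)
    (hrange k hk t₂ (h0.trans hlt.le))).1 h
  linarith
end
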